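/- arXiv:0810.3864 — 2 statements merged into one kernel-verified Lean document; each statement's English description precedes it below -/
import Mathlib

section
/- Let K be an algebraically closed field, let G be an n×n matrix over K, and suppose the characteristic polynomial of G factors as ∏_{i=1}^{m} (X − λ_i)^{p_i} where λ_1, …, λ_m ∈ K are pairwise distinct and p_1, …, p_m ≥ 1. Then for every integer l ≥ 0, det M_{m,l}(G) = (λ_1⋯λ_m)^l · det M_{m,0}(G). -/
/-!
The characteristic polynomial of `G` determines every `tr Gᵏ`: by Jacobi's formula, the power series
`q = det (1 - X G)` satisfies `q' = -q · ∑ₖ tr Gᵏ⁺¹ Xᵏ`, and `q` is a unit. Comparing `G` with the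
diagonal matrix in which `λᵢ` is repeated `pᵢ` times gives `tr Gᵏ = ∑ pᵢ λᵢᵏ` over any commutative
ring. Hence `M_{m,l}(G) = Vᵀ · diag(pᵢ λᵢˡ) · V` with `V` the Vandermonde matrix of the `λᵢ`, and
the determinant depends on `l` only through `∏ λᵢˡ`.
-/

open Polynomial Matrix
open scoped PowerSeries

section Jacobi

theorem derivation_prod {R A M ι : Type*} [CommSemiring R] [CommSemiring A] [Algebra R A]
    [AddCommMonoid M] [Module A M] [Module R M] [DecidableEq ι]
    (D : Derivation R A M) (s : Finset ι) (f : ι → A) :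
    D (∏ i ∈ s, f i) = ∑ i ∈ s, (∏ j ∈ s.erase i, f j) • D (f i) := by
  induction s using Finset.induction_on with
  | empty => simp
  | insert a s ha ih =>
    have herase : ∀ i ∈ s, ∏ j ∈ (insert a s).erase i, f j = f a * ∏ j ∈ s.erase i, f j := by
      intro i hi
      rw [Finset.erase_insert_of_ne (ne_of_mem_of_not_mem hi ha).symm,
        Finset.prod_insert (mt Finset.mem_of_mem_erase ha)]
    rw [Finset.prod_insert ha, D.leibniz, ih, Finset.sum_insert ha, Finset.erase_insert ha,
      Finset.smul_sum, add_comm]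
    congr 1
    exact Finset.sum_congr rfl fun i hi => by rw [herase i hi, mul_smul]

variable {R A ι : Type*} [CommSemiring R] [CommRing A] [Algebra R A] [Fintype ι] [DecidableEq ι]

theorem derivation_det_eq_sum_det_updateCol (D : Derivation R A A) (M : Matrix ι ι A) :
    D M.det = ∑ i, (M.updateCol i fun k => D (M k i)).det := by
  have hprod (σ : Equiv.Perm ι) (i : ι) :
      ∏ j, M.updateCol i (fun k => D (M k i)) (σ j) j =
        (∏ j ∈ Finset.univ.erase i, M (σ j) j) * D (M (σ i) i) := by
    rw [← Finset.prod_erase_mul _ _ (Finset.mem_univ i), updateCol_self]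
    congr 1
    exact Finset.prod_congr rfl fun j hj => updateCol_ne (Finset.ne_of_mem_erase hj)
  simp only [det_apply, map_sum, Units.smul_def, map_zsmul, derivation_prod, hprod, smul_eq_mul,
    Finset.smul_sum]
  exact Finset.sum_comm

theorem derivation_det (D : Derivation R A A) (M : Matrix ι ι A) :
    D M.det = (M.adjugate * M.map D).trace := by
  rw [derivation_det_eq_sum_det_updateCol]
  refine Finset.sum_congr rfl fun i _ => ?_
  rw [← cramer_apply, cramer_eq_adjugate_mulVec]
  rfl

end Jacobi

section TracePow

variable {R ι κ : Type*} [CommRing R] [Fintype ι] [DecidableEq ι] [Fintype κ]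

/-- The geometric series `∑ₖ Gᵏ Xᵏ`, the inverse of `1 - X G`, stored entrywise so that it is a
matrix over the commutative ring `R⟦X⟧`. -/
def geomSeries (G : Matrix ι ι R) : Matrix ι ι R⟦X⟧ :=
  of fun i j => PowerSeries.mk fun k => (G ^ k) i j

theorem geomSeries_mul_map_C (G : Matrix ι ι R) :
    geomSeries G * G.map PowerSeries.C =
      of fun i j => PowerSeries.mk fun k => (G ^ (k + 1)) i j := by
  ext i j k
  simp [geomSeries, mul_apply, pow_succ]

theorem geomSeries_mul_one_sub (G : Matrix ι ι R) :
    geomSeries G * (1 - (PowerSeries.X : R⟦X⟧) • G.map PowerSeries.C) = 1 := by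
  rw [mul_sub, mul_one, Matrix.mul_smul, geomSeries_mul_map_C, sub_eq_iff_eq_add]
  ext i j k
  cases k <;> by_cases hij : i = j <;>
    simp [geomSeries, hij, PowerSeries.coeff_succ_X_mul, PowerSeries.coeff_one]

theorem coe_charpolyRev (G : Matrix ι ι R) :
    (G.charpolyRev : R⟦X⟧) = (1 - (PowerSeries.X : R⟦X⟧) • G.map PowerSeries.C).det := by
  rw [charpolyRev, ← Polynomial.coeToPowerSeries.ringHom_apply, RingHom.map_det]
  congr 1
  ext i j : 1
  simp [one_apply, apply_ite, PowerSeries.X_mul]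

theorem isUnit_coe_charpolyRev (G : Matrix ι ι R) : IsUnit (G.charpolyRev : R⟦X⟧) := by
  simp [PowerSeries.isUnit_iff_constantCoeff, coeff_zero_eq_eval_zero]

theorem derivative_coe_charpolyRev (G : Matrix ι ι R) :
    d⁄dX R (G.charpolyRev : R⟦X⟧) =
      -(G.charpolyRev * PowerSeries.mk fun k => (G ^ (k + 1)).trace) := by
  set A : Matrix ι ι R⟦X⟧ := 1 - (PowerSeries.X : R⟦X⟧) • G.map PowerSeries.C with hA
  have hadj : A.adjugate = A.det • geomSeries G := by
    rw [← one_mul A.adjugate, ← geomSeries_mul_one_sub G, mul_assoc, mul_adjugate,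
      Matrix.mul_smul, mul_one]
  have hderiv : A.map (d⁄dX R) = -G.map PowerSeries.C := by
    ext i j : 1
    by_cases h : i = j <;> simp [hA, one_apply, h]
  have htrace : (geomSeries G * G.map PowerSeries.C).trace =
      PowerSeries.mk fun k => (G ^ (k + 1)).trace := by
    ext k
    simp [geomSeries_mul_map_C, trace]
  rw [coe_charpolyRev, derivation_det, hderiv, hadj, mul_neg, trace_neg, smul_mul, trace_smul,
    htrace, smul_eq_mul]

theorem trace_pow_eq_of_charpoly_eq [DecidableEq κ] {G : Matrix ι ι R} {H : Matrix κ κ R}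
    (h : G.charpoly = H.charpoly) (k : ℕ) : (G ^ k).trace = (H ^ k).trace := by
  nontriviality R
  cases k with
  | zero =>
    rw [pow_zero, pow_zero, trace_one, trace_one, ← charpoly_natDegree_eq_dim G, h,
      charpoly_natDegree_eq_dim]
  | succ k =>
    have hrev : G.charpolyRev = H.charpolyRev := by
      rw [← reverse_charpoly, h, reverse_charpoly]
    have hmul := derivative_coe_charpolyRev G
    rw [hrev, derivative_coe_charpolyRev, neg_inj, (isUnit_coe_charpolyRev H).mul_right_inj] at hmul
    simpa using (congrArg (PowerSeries.coeff k) hmul).symm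

theorem trace_pow_eq_sum_of_charpoly_eq_prod {G : Matrix ι ι R} {lam : κ → R} {p : κ → ℕ}
    (hchar : G.charpoly = ∏ i, (X - C (lam i)) ^ p i) (k : ℕ) :
    (G ^ k).trace = ∑ i, p i * lam i ^ k := by
  classical
  let D : Matrix (Σ i, Fin (p i)) (Σ i, Fin (p i)) R := diagonal fun x => lam x.1
  have hD : G.charpoly = D.charpoly := by
    simp [hchar, D, charpoly_diagonal, Fintype.prod_sigma]
  rw [trace_pow_eq_of_charpoly_eq hD]
  simp [D, diagonal_pow, trace_diagonal, Fintype.sum_sigma]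

end TracePow

section Hankel

variable {R : Type*} [CommRing R] {m : ℕ}

theorem vandermonde_transpose_mul_diagonal_mul_vandermonde (lam w : Fin m → R) :
    (vandermonde lam)ᵀ * diagonal w * vandermonde lam =
      of fun i j : Fin m => ∑ a, w a * lam a ^ (i.1 + j.1) := by
  ext i j
  rw [mul_apply]
  simp only [mul_diagonal, transpose_apply, vandermonde_apply, of_apply]
  exact Finset.sum_congr rfl fun a _ => by ring

theorem det_of_sum_mul_pow_add (lam w : Fin m → R) :
    (of fun i j : Fin m => ∑ a, w a * lam a ^ (i.1 + j.1)).det =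
      (∏ a, w a) * (vandermonde lam).det ^ 2 := by
  rw [← vandermonde_transpose_mul_diagonal_mul_vandermonde, det_mul, det_mul, det_transpose,
    det_diagonal]
  ring

end Hankel

theorem det_M_l_eq_pow_mul_det_M_zero_general {R ι : Type*} [CommRing R] [Fintype ι]
    [DecidableEq ι] {m : ℕ} (G : Matrix ι ι R) (lam : Fin m → R) (p : Fin m → ℕ)
    (hchar : G.charpoly = ∏ i, (X - C (lam i)) ^ p i) (l : ℕ) :
    (of fun i j : Fin m => (G ^ (i.1 + j.1 + l)).trace).det =
      (∏ i, lam i) ^ l * (of fun i j : Fin m => (G ^ (i.1 + j.1)).trace).det := by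
  have hshift (k : ℕ) : (G ^ (k + l)).trace = ∑ a, (p a * lam a ^ l) * lam a ^ k := by
    rw [trace_pow_eq_sum_of_charpoly_eq_prod hchar]
    exact Finset.sum_congr rfl fun a _ => by ring
  simp only [hshift, trace_pow_eq_sum_of_charpoly_eq_prod hchar, det_of_sum_mul_pow_add,
    Finset.prod_mul_distrib, Finset.prod_pow]
  ring

/-- If the characteristic polynomial of `G` factors as
`∏ (X - λᵢ)^{pᵢ}` with the `λᵢ` pairwise distinct and `pᵢ ≥ 1`, then for every `l ≥ 0`,
`det M_{m,l}(G) = (λ₁⋯λ_m)^l · det M_{m,0}(G)`.  Here the `(i,j)` entry of `M_{t,l}(G)`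
(`0`-based) is `tr G^{i+j+l}`. -/
theorem det_M_l_eq_pow_mul_det_M_zero {K : Type*} [Field K] [IsAlgClosed K] {n m : ℕ}
    (G : Matrix (Fin n) (Fin n) K) (lam : Fin m → K) (p : Fin m → ℕ)
    (hinj : Function.Injective lam) (hp : ∀ i, 1 ≤ p i)
    (hchar : G.charpoly = ∏ i, (X - C (lam i)) ^ p i)
    (l : ℕ) :
    (Matrix.of fun i j : Fin m => (G ^ (i.1 + j.1 + l)).trace).det =
      (∏ i, lam i) ^ l *
        (Matrix.of fun i j : Fin m => (G ^ (i.1 + j.1)).trace).det :=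
  det_M_l_eq_pow_mul_det_M_zero_general G lam p hchar l
end

section
/- Let K be an algebraically closed field of characteristic zero and let G be an n×n matrix over K. The number of distinct eigenvalues of G equals m if and only if det M_m(G) ≠ 0 and det M_t(G) = 0 for every integer t > m. -/
open Polynomial Matrix

/-!
If `G` has distinct eigenvalues `x₁, …, xₛ` with multiplicities `w₁, …, wₛ`, then
`tr G ^ k = ∑ wₐ xₐ ^ k`, so `M_t(G)` is the Hankel matrix of a weighted power sum with `s` nodes.
For `t = s` it factors as `Vᵀ * diagonal w * V` with `V` the Vandermonde matrix of the nodes, hence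
is nonsingular as soon as no multiplicity vanishes in the field. For `t > s` the coefficients of
`∏ (X - xₐ)` form a linear recurrence satisfied by the traces, i.e. a nonzero vector in the kernel
of `M_t(G)`.
-/

section Hankel

/-- The `t × t` Hankel matrix of the sequence `c`, with rows and columns indexed from `0`. -/
def hankelMatrix {R : Type*} (c : ℕ → R) (t : ℕ) : Matrix (Fin t) (Fin t) R :=
  Matrix.of fun i j => c (i.1 + j.1)

theorem map_hankelMatrix {R S : Type*} (f : R → S) (c : ℕ → R) (t : ℕ) :
    (hankelMatrix c t).map f = hankelMatrix (fun k => f (c k)) t :=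
  rfl

/-- The power sums of the nodes `v` with weights `w`, i.e. the moments of the discrete measure
with mass `w a` at each `v a`. -/
def weightedPowerSum {R α : Type*} [Semiring R] [Fintype α] (w v : α → R) (k : ℕ) : R :=
  ∑ a, w a * v a ^ k

theorem weightedPowerSum_comp_equiv {R α β : Type*} [Semiring R] [Fintype α] [Fintype β]
    (e : β ≃ α) (w v : α → R) : weightedPowerSum (w ∘ e) (v ∘ e) = weightedPowerSum w v :=
  funext fun k => e.sum_comp fun a => w a * v a ^ k

variable {R α : Type*} [CommRing R] [Fintype α]

theorem hankelMatrix_weightedPowerSum {s : ℕ} (w v : Fin s → R) :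
    hankelMatrix (weightedPowerSum w v) s = (vandermonde v)ᵀ * (diagonal w * vandermonde v) := by
  ext i j
  simp only [hankelMatrix, weightedPowerSum, of_apply, mul_apply (M := (vandermonde v)ᵀ),
    diagonal_mul, transpose_apply, vandermonde_apply]
  exact Finset.sum_congr rfl fun a _ => by ring

theorem det_hankelMatrix_weightedPowerSum {s : ℕ} (w v : Fin s → R) :
    (hankelMatrix (weightedPowerSum w v) s).det = (∏ a, w a) * (vandermonde v).det ^ 2 := by
  rw [hankelMatrix_weightedPowerSum, det_mul, det_mul, det_transpose, det_diagonal]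
  ring

theorem det_hankelMatrix_weightedPowerSum_ne_zero [IsDomain R] {w v : α → R}
    (hw : ∀ a, w a ≠ 0) (hv : Function.Injective v) :
    (hankelMatrix (weightedPowerSum w v) (Fintype.card α)).det ≠ 0 := by
  let e := (Fintype.equivFin α).symm
  rw [← weightedPowerSum_comp_equiv e, det_hankelMatrix_weightedPowerSum]
  exact mul_ne_zero (Finset.prod_ne_zero_iff.mpr fun a _ => hw (e a))
    (pow_ne_zero 2 (det_vandermonde_ne_zero_iff.mpr (hv.comp e.injective)))

theorem hankelMatrix_weightedPowerSum_mulVec_coeff (w : α → R) {v : α → R} {p : R[X]} {t : ℕ}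
    (hp : p.natDegree < t) (hroot : ∀ a, p.eval (v a) = 0) :
    hankelMatrix (weightedPowerSum w v) t *ᵥ (fun j => p.coeff j) = 0 := by
  ext i
  calc ∑ j : Fin t, (∑ a, w a * v a ^ (i.1 + j.1)) * p.coeff j
      = ∑ a, w a * v a ^ i.1 * ∑ j : Fin t, p.coeff j * v a ^ j.1 := by
        simp_rw [Finset.sum_mul, Finset.mul_sum]
        rw [Finset.sum_comm]
        exact Finset.sum_congr rfl fun a _ => Finset.sum_congr rfl fun j _ => by ring
    _ = ∑ a, w a * v a ^ i.1 * p.eval (v a) := by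
        simp_rw [eval_eq_sum_range' hp, Finset.sum_range]
    _ = 0 := by simp only [hroot, mul_zero, Finset.sum_const_zero]

theorem det_hankelMatrix_weightedPowerSum_eq_zero (w v : α → R) {t : ℕ}
    (ht : Fintype.card α < t) : (hankelMatrix (weightedPowerSum w v) t).det = 0 := by
  nontriviality R
  let p : R[X] := ∏ a, (X - C (v a))
  have hmonic : p.Monic := monic_prod_X_sub_C v Finset.univ
  have hdeg : p.natDegree < t := (natDegree_finsetProd_X_sub_C_eq_card Finset.univ v).trans_lt ht
  have hroot (a : α) : p.eval (v a) = 0 := by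
    rw [eval_prod]
    exact Finset.prod_eq_zero (Finset.mem_univ a) (by simp)
  refine det_eq_zero_of_mulVec_eq_zero_of_mem_nonZeroDivisors
    (hankelMatrix_weightedPowerSum_mulVec_coeff w hdeg hroot) (i := ⟨p.natDegree, hdeg⟩) ?_
  rw [hmonic.coeff_natDegree]
  exact one_mem _

end Hankel

theorem map_trace_pow {ι R S : Type*} [Fintype ι] [DecidableEq ι] [CommRing R] [CommRing S]
    (f : R →+* S) (G : Matrix ι ι R) (k : ℕ) : f (G ^ k).trace = (G.map f ^ k).trace :=
  (AddMonoidHom.map_trace f _).trans (congrArg trace (map_pow f.mapMatrix G k))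

section Trace

variable {ι R : Type*} [Fintype ι] [DecidableEq ι] [CommRing R] [IsDomain R] {G : Matrix ι ι R}

theorem card_roots_charpoly_of_splits (hG : G.charpoly.Splits) :
    Multiset.card G.charpoly.roots = Fintype.card ι := by
  rw [← hG.natDegree_eq_card_roots, charpoly_natDegree_eq_dim]

theorem det_add_scalar_eq_prod_roots_charpoly_of_splits (hG : G.charpoly.Splits) (a : R) :
    (G + scalar ι a).det = (G.charpoly.roots.map fun x => x + a).prod := by
  have hneg : G + scalar ι a = -(scalar ι (-a) - G) := by rw [map_neg]; abel
  rw [hneg, det_neg, ← eval_charpoly, hG.eval_eq_prod_roots_of_monic G.charpoly_monic,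
    ← card_roots_charpoly_of_splits hG, ← Multiset.card_map (fun x => -a - x),
    ← Multiset.prod_map_neg, Multiset.map_map]
  simp only [Function.comp_apply, neg_sub, sub_neg_eq_add]

theorem det_aeval_eq_prod_roots_charpoly_of_splits (hG : G.charpoly.Splits) {q : R[X]}
    (hq : q.Splits) : (aeval G q).det = (G.charpoly.roots.map q.eval).prod := by
  induction hq using Submonoid.closure_induction with
  | mem p hp =>
    rcases hp with ⟨a, rfl⟩ | ⟨a, rfl⟩
    · simp [card_roots_charpoly_of_splits hG, algebraMap_eq_diagonal, Pi.algebraMap_def]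
    · have haeval : aeval G (X + C a) = G + scalar ι a := by
        simp [algebraMap_eq_diagonal, Pi.algebraMap_def]
      simp only [haeval, det_add_scalar_eq_prod_roots_charpoly_of_splits hG, eval_add, eval_X,
        eval_C]
  | one => simp
  | mul p q _ _ hp hq => simp [hp, hq, Multiset.prod_map_mul]

theorem roots_charpoly_aeval {K : Type*} [Field K] [IsAlgClosed K] (G : Matrix ι ι K) (q : K[X]) :
    (aeval G q).charpoly.roots = G.charpoly.roots.map q.eval := by
  have hcharpoly :
      (aeval G q).charpoly = ((G.charpoly.roots.map q.eval).map fun y => X - C y).prod := by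
    refine Polynomial.funext fun r => ?_
    have haeval : scalar ι r - aeval G q = aeval G (C r - q) := by
      simp [algebraMap_eq_diagonal, Pi.algebraMap_def]
    rw [eval_charpoly, haeval, det_aeval_eq_prod_roots_charpoly_of_splits (IsAlgClosed.splits _)
      (IsAlgClosed.splits _), eval_multiset_prod]
    simp [Multiset.map_map]
  rw [hcharpoly, roots_multiset_prod_X_sub_C]

theorem trace_pow_eq_sum_roots_charpoly_of_splits (hG : G.charpoly.Splits) (k : ℕ) :
    (G ^ k).trace = (G.charpoly.roots.map (· ^ k)).sum := by
  -- `det (r - G ^ k)` is only computed when `r - X ^ k` splits, so pass to an algebraic closure.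
  let F := FractionRing R
  let f : R →+* AlgebraicClosure F := (algebraMap F (AlgebraicClosure F)).comp (algebraMap R F)
  have hf : Function.Injective f :=
    (algebraMap F (AlgebraicClosure F)).injective.comp (IsFractionRing.injective R F)
  apply hf
  calc f (G ^ k).trace
      = (aeval (G.map f) (X ^ k : (AlgebraicClosure F)[X])).trace := by
        rw [map_trace_pow, map_pow, aeval_X]
    _ = ((G.map f).charpoly.roots.map (X ^ k : (AlgebraicClosure F)[X]).eval).sum := by
        rw [trace_eq_sum_roots_charpoly, roots_charpoly_aeval]
    _ = f (G.charpoly.roots.map (· ^ k)).sum := by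
        rw [charpoly_map, hG.roots_map_of_injective hf, map_multiset_sum]
        simp [Multiset.map_map]

theorem trace_pow_eq_weightedPowerSum_of_splits [DecidableEq R] (hG : G.charpoly.Splits) :
    (fun k => (G ^ k).trace) = weightedPowerSum
      (fun x : G.charpoly.roots.toFinset => (G.charpoly.roots.count x.1 : R)) Subtype.val := by
  ext k
  rw [trace_pow_eq_sum_roots_charpoly_of_splits hG, Finset.sum_multiset_map_count,
    ← Finset.sum_coe_sort]
  simp only [nsmul_eq_mul, weightedPowerSum]

end Trace

theorem algebraMap_det_hankelMatrix_trace_pow {ι R L : Type*} [Fintype ι] [DecidableEq ι]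
    [CommRing R] [CommRing L] [IsDomain L] [DecidableEq L] [Algebra R L] {G : Matrix ι ι R}
    (hG : (G.charpoly.map (algebraMap R L)).Splits) (t : ℕ) :
    algebraMap R L (hankelMatrix (fun k => (G ^ k).trace) t).det =
      (hankelMatrix (weightedPowerSum
        (fun x : (G.charpoly.aroots L).toFinset => ((G.charpoly.aroots L).count x.1 : L))
        Subtype.val) t).det := by
  rw [← charpoly_map] at hG
  rw [RingHom.map_det, RingHom.mapMatrix_apply, map_hankelMatrix]
  simp only [map_trace_pow]
  rw [trace_pow_eq_weightedPowerSum_of_splits hG, charpoly_map, aroots]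

theorem spectral_size_iff_general {ι R L : Type*} [Fintype ι] [DecidableEq ι] [CommRing R]
    [CommRing L] [IsDomain L] [DecidableEq L] [Algebra R L] [FaithfulSMul R L] (G : Matrix ι ι R)
    (hG : (G.charpoly.map (algebraMap R L)).Splits)
    (hmult : ∀ x ∈ G.charpoly.aroots L, ((G.charpoly.aroots L).count x : L) ≠ 0) (m : ℕ) :
    (G.charpoly.aroots L).toFinset.card = m ↔
      (hankelMatrix (fun k => (G ^ k).trace) m).det ≠ 0 ∧
        ∀ t : ℕ, m < t → (hankelMatrix (fun k => (G ^ k).trace) t).det = 0 := by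
  have hinj := FaithfulSMul.algebraMap_injective R L
  have hne :
      (hankelMatrix (fun k => (G ^ k).trace) (G.charpoly.aroots L).toFinset.card).det ≠ 0 := by
    rw [← map_ne_zero_iff _ hinj, algebraMap_det_hankelMatrix_trace_pow hG, ← Fintype.card_coe]
    exact det_hankelMatrix_weightedPowerSum_ne_zero
      (fun x => hmult x (Multiset.mem_toFinset.mp x.2)) Subtype.val_injective
  have hzero (t : ℕ) (ht : (G.charpoly.aroots L).toFinset.card < t) :
      (hankelMatrix (fun k => (G ^ k).trace) t).det = 0 := by
    rw [← map_eq_zero_iff _ hinj, algebraMap_det_hankelMatrix_trace_pow hG]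
    exact det_hankelMatrix_weightedPowerSum_eq_zero _ _ ((Fintype.card_coe _).trans_lt ht)
  constructor
  · rintro rfl
    exact ⟨hne, hzero⟩
  · rintro ⟨hne_m, hzero_m⟩
    exact le_antisymm (not_lt.mp fun h => hne (hzero_m _ h)) (not_lt.mp fun h => hne_m (hzero _ h))

/-- Over an algebraically closed field of characteristic zero, the
number of distinct eigenvalues of `G` (the number of distinct roots of its
characteristic polynomial) equals `m` iff `det M_m(G) ≠ 0` and `det M_t(G) = 0` for all
`t > m`, where the `(i,j)` entry of `M_t(G)` (`0`-based) is `tr G^{i+j}`. -/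
theorem spectral_size_iff {K : Type*} [Field K] [IsAlgClosed K] [CharZero K] [DecidableEq K] {n : ℕ}
    (G : Matrix (Fin n) (Fin n) K) (m : ℕ) :
    G.charpoly.roots.toFinset.card = m ↔
      ((Matrix.of fun i j : Fin m => (G ^ (i.1 + j.1)).trace).det ≠ 0 ∧
        ∀ t : ℕ, m < t →
          (Matrix.of fun i j : Fin t => (G ^ (i.1 + j.1)).trace).det = 0) := by
  simpa only [aroots, Algebra.algebraMap_self, Polynomial.map_id, hankelMatrix] using
    spectral_size_iff_general (L := K) G (IsAlgClosed.splits _)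
      (fun _ hx => Nat.cast_ne_zero.mpr (Multiset.count_ne_zero.mpr hx)) m
end
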